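/- arXiv:2209.08658 — 3 statements merged into one kernel-verified Lean document; each statement's English description precedes it below -/
import Mathlib

section
/- Let C be an abelian category with Ext groups and let (A,B) be a left weak AB context cut on a class S. Then (A∩S, B∩S) is a 1-cotorsion pair cut on Thick(A∩S), and Ext^i(A',B')=0 for all A'∈A∩S, B'∈B∩S and all i≥1. -/
/-!
Write `X = A ∩ S` and `Y = B ∩ S`. Cutting by `S` reduces the claim to the classical
Auslander–Buchweitz approximation theory for `X` and `Y`.

Two approximations of an object `M` are compared: a left one `0 → K → U → M → 0` and a right one
`0 → M → H → V → 0`, with `K, H ∈ Y` and `U, V ∈ X`. A left approximation yields a right one by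
embedding `U` into an object of `X ∩ Y` with cokernel in `X`. Consequently the objects with a left
approximation are stable under quotients of objects of `X`, so every object of `X^∧` has both
approximations.

*Ext-vanishing.* Let `Z` be the class of those `M ∈ Y` with `Ext^i(X, M) = 0` for all `i ≥ 1`.
It is closed under cones and contains `X ∩ Y`, so the previous paragraph applies to `(X, Z)`:
any `M ∈ Y ⊆ X^∧` has a left approximation `0 → K → U → M → 0` with `K ∈ Z`. Then `U ∈ X ∩ Y ⊆ Z`,
whence `M ∈ Z` by closure under cones.

*Approximations on the thick closure.* It remains to see that the class `T` of objects having left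
(equivalently right) approximations is thick. Extensions, cones and cocones follow by pulling back
and pushing out approximations, using that an extension of an object of `X` by an object of `Y`
splits. For a summand `M'` of `M ∈ T`, cover `M` by `U ∈ X`; the kernel `L` of the composite
`U → M → M'` is a summand of the kernel of an epimorphism `U ⊞ U → M`, which again lies in `T`, and
`M' ∈ T` as soon as `L ∈ T`. This process stops: objects of `T` lie in `X^∧`, so the groups
`Ext^i(M, Y)` vanish for `i` large, the bound drops by one when passing to the kernel, and an object
of `T` with `Ext^i(M, Y) = 0` for all `i ≥ 1` is a summand of an object of `X`.
-/

open CategoryTheory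

universe w v u

variable {C : Type u} [Category.{v} C] [Abelian C]

/-- `IsSES A B X` : there is a short exact sequence `0 → A → B → X → 0` in `C`. -/
def IsSES (A B X : C) : Prop :=
  ∃ (f : A ⟶ B) (g : B ⟶ X) (zero : f ≫ g = 0),
    (ShortComplex.mk f g zero).ShortExact

/-- `P` is closed under extensions. -/
def ClosedUnderExtensions (P : C → Prop) : Prop :=
  ∀ ⦃A B X : C⦄, IsSES A B X → P A → P X → P B

/-- `P` is closed under cones. -/
def ClosedUnderCones (P : C → Prop) : Prop :=
  ∀ ⦃A B X : C⦄, IsSES A B X → P A → P B → P X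

/-- `P` is closed under cocones. -/
def ClosedUnderCocones (P : C → Prop) : Prop :=
  ∀ ⦃A B X : C⦄, IsSES A B X → P B → P X → P A

/-- `P` is closed under isomorphisms. -/
def ClosedUnderIsos (P : C → Prop) : Prop :=
  ∀ ⦃X Y : C⦄, (X ≅ Y) → P X → P Y

/-- `P` is closed under direct summands. -/
def ClosedUnderSummands (P : C → Prop) : Prop :=
  ∀ ⦃X Y : C⦄, P X → (∃ (i : Y ⟶ X) (r : X ⟶ Y), i ≫ r = 𝟙 Y) → P Y

/-- `HasResLength P n M` : there is an exact sequence `0 → W_n → ⋯ → W_0 → M → 0`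
with all `W_i` in `P`. -/
inductive HasResLength (P : C → Prop) : ℕ → C → Prop
  | of_iso {M W : C} (hW : P W) (e : M ≅ W) : HasResLength P 0 M
  | step {K W M : C} {n : ℕ} (hW : P W) (h : IsSES K W M)
      (hK : HasResLength P n K) : HasResLength P (n + 1) M

/-- `P^∧` : the class of objects admitting a finite `P`-resolution. -/
def ResClass (P : C → Prop) : C → Prop := fun M => ∃ n, HasResLength P n M

/-- The resolution dimension `resdim_P(M) ∈ ℕ∞`. -/
noncomputable def resDim (P : C → Prop) (M : C) : ℕ∞ :=
  sInf {n : ℕ∞ | ∃ m : ℕ, n = (m : ℕ∞) ∧ HasResLength P m M}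

/-- `HasCoresLength P n M` : there is an exact sequence `0 → M → W_0 → ⋯ → W_n → 0`
with all `W_i` in `P`. -/
inductive HasCoresLength (P : C → Prop) : ℕ → C → Prop
  | of_iso {M W : C} (hW : P W) (e : M ≅ W) : HasCoresLength P 0 M
  | step {M W K : C} {n : ℕ} (hW : P W) (h : IsSES M W K)
      (hK : HasCoresLength P n K) : HasCoresLength P (n + 1) M

/-- `ω ∩ S` is a relative generator in `ω` : every `W ∈ ω` fits in a short exact
sequence `0 → W' → F → W → 0` with `F ∈ ω ∩ S` and `W' ∈ ω`. -/
def RelGenerator (ω S : C → Prop) : Prop :=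
  ∀ ⦃W : C⦄, ω W → ∃ (W' F : C), ω W' ∧ (ω F ∧ S F) ∧ IsSES W' F W

/-- `P` is left thick : closed under extensions, direct summands and cocones. -/
def LeftThick (P : C → Prop) : Prop :=
  ClosedUnderExtensions P ∧ ClosedUnderSummands P ∧ ClosedUnderCocones P

/-- `P` is right thick : closed under extensions, direct summands and cones. -/
def RightThick (P : C → Prop) : Prop :=
  ClosedUnderExtensions P ∧ ClosedUnderSummands P ∧ ClosedUnderCones P

/-- The smallest thick class (closed under extensions, direct summands, cones and
cocones) containing `P`. -/
inductive ThickClosure (P : C → Prop) : C → Prop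
  | of {M : C} (h : P M) : ThickClosure P M
  | ext {A B X : C} (h : IsSES A B X) (hA : ThickClosure P A) (hX : ThickClosure P X) :
      ThickClosure P B
  | cone {A B X : C} (h : IsSES A B X) (hA : ThickClosure P A) (hB : ThickClosure P B) :
      ThickClosure P X
  | cocone {A B X : C} (h : IsSES A B X) (hB : ThickClosure P B) (hX : ThickClosure P X) :
      ThickClosure P A
  | summand {X Y : C} (hX : ThickClosure P X) (i : Y ⟶ X) (r : X ⟶ Y) (hir : i ≫ r = 𝟙 Y) :
      ThickClosure P Y

section WithExt

variable [HasExt.{w} C]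

/-- `Ext^i(A, B) = 0` for all `A ∈ P`, `B ∈ Q` and all `i ≥ 1`. -/
def ExtVanish (P Q : C → Prop) : Prop :=
  ∀ ⦃A B : C⦄, P A → Q B → ∀ i : ℕ, 1 ≤ i → Subsingleton (Abelian.Ext A B i)

/-- `(X, ω)` is a left Frobenius pair in `C`. -/
def IsLeftFrobenius (X ω : C → Prop) : Prop :=
  LeftThick X ∧ (∀ ⦃W : C⦄, ω W → X W) ∧ ClosedUnderSummands ω ∧
    ExtVanish X ω ∧
    (∀ ⦃A : C⦄, X A → ∃ (W A' : C), ω W ∧ X A' ∧ IsSES A W A')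

/-- `(X, ω)` is a left Frobenius pair cut on `S`. -/
def IsLeftFrobeniusCut (X ω S : C → Prop) : Prop :=
  LeftThick X ∧
  IsLeftFrobenius (fun M => X M ∧ S M) (fun M => ω M ∧ S M) ∧
  (ExtVanish (fun M => ω M ∧ S M) ω ∧ RelGenerator ω S) ∧
  (ClosedUnderExtensions ω ∧ ClosedUnderSummands ω)

/-- `(A, B)` is a left weak AB context cut on `S`. -/
def IsLeftWeakABCut (A B S : C → Prop) : Prop :=
  IsLeftFrobeniusCut A (fun M => A M ∧ B M) S ∧
  RightThick (fun M => B M ∧ S M) ∧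
  (∀ ⦃M : C⦄, B M → S M → ResClass (fun N => A N ∧ S N) M)

/-- `(U, V)` is a left 1-cotorsion pair cut on `T`. -/
def IsLeft1CotorsionCut (U V T : C → Prop) : Prop :=
  ClosedUnderSummands U ∧
  (∀ ⦃A B : C⦄, U A → T A → V B → Subsingleton (Abelian.Ext A B 1)) ∧
  (∀ ⦃t : C⦄, T t → ∃ (K A : C), U A ∧ (∃ V' : C, V V' ∧ Nonempty (K ≅ V')) ∧ IsSES K A t)

/-- `(U, V)` is a right 1-cotorsion pair cut on `T`. -/
def IsRight1CotorsionCut (U V T : C → Prop) : Prop :=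
  ClosedUnderSummands V ∧
  (∀ ⦃A B : C⦄, U A → V B → T B → Subsingleton (Abelian.Ext A B 1)) ∧
  (∀ ⦃t : C⦄, T t → ∃ (B W : C), V B ∧ (∃ U' : C, U U' ∧ Nonempty (W ≅ U')) ∧ IsSES t B W)

/-- `(U, V)` is a 1-cotorsion pair cut on `T`. -/
def Is1CotorsionCut (U V T : C → Prop) : Prop :=
  IsLeft1CotorsionCut U V T ∧ IsRight1CotorsionCut U V T

/-- `(A, B)` is a left `n`-cotorsion pair cut on `S`. -/
def IsLeftNCotorsionCut (n : ℕ) (A B S : C → Prop) : Prop :=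
  ClosedUnderSummands A ∧
  (∀ ⦃X Y : C⦄, A X → S X → B Y → ∀ i : ℕ, 1 ≤ i → i ≤ n → Subsingleton (Abelian.Ext X Y i)) ∧
  (∀ ⦃s : C⦄, S s → ∃ (K X : C), A X ∧ (∃ m : ℕ, m ≤ n - 1 ∧ HasResLength B m K) ∧ IsSES K X s)

/-- `(A, B)` is a right `n`-cotorsion pair cut on `S`. -/
def IsRightNCotorsionCut (n : ℕ) (A B S : C → Prop) : Prop :=
  ClosedUnderSummands B ∧
  (∀ ⦃X Y : C⦄, A X → B Y → S Y → ∀ i : ℕ, 1 ≤ i → i ≤ n → Subsingleton (Abelian.Ext X Y i)) ∧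
  (∀ ⦃s : C⦄, S s → ∃ (Y W : C), B Y ∧ (∃ m : ℕ, m ≤ n - 1 ∧ HasCoresLength A m W) ∧ IsSES s Y W)

/-- `(F, G)` is a complete cotorsion pair in `T`. -/
def IsCompleteCotorsionPairIn (T F G : C → Prop) : Prop :=
  (∀ ⦃M : C⦄, F M → T M) ∧ (∀ ⦃M : C⦄, G M → T M) ∧
  ClosedUnderSummands F ∧ ClosedUnderSummands G ∧
  (∀ ⦃A B : C⦄, F A → G B → Subsingleton (Abelian.Ext A B 1)) ∧
  (∀ ⦃M : C⦄, T M →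
    (∃ G₁ F₁ : C, G G₁ ∧ F F₁ ∧ IsSES G₁ F₁ M) ∧
    (∃ G₂ F₂ : C, G G₂ ∧ F F₂ ∧ IsSES M G₂ F₂))

end WithExt

open CategoryTheory.Limits CategoryTheory.Abelian
open scoped ZeroObject

/-! ### Short exact sequences -/

lemma IsSES.of_kernel {A B X : C} (f : A ⟶ B) (g : B ⟶ X) (zero : f ≫ g = 0) [Mono f] [Epi g]
    (hl : ∀ {T : C} (k : T ⟶ B), k ≫ g = 0 → ∃ l : T ⟶ A, l ≫ f = k) : IsSES A B X := by
  refine ⟨f, g, zero, ShortComplex.ShortExact.mk' ?_ ‹_› ‹_›⟩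
  exact ShortComplex.exact_of_f_is_kernel _
    (KernelFork.IsLimit.ofι' f zero fun k hk => ⟨(hl k hk).choose, (hl k hk).choose_spec⟩)

lemma IsSES.op {A B X : C} (h : IsSES A B X) :
    IsSES (Opposite.op X) (Opposite.op B) (Opposite.op A) := by
  obtain ⟨f, g, zero, hS⟩ := h
  exact ⟨g.op, f.op, by rw [← op_comp, zero, op_zero], hS.op⟩

lemma IsSES.unop {A B X : Cᵒᵖ} (h : IsSES A B X) : IsSES X.unop B.unop A.unop := by
  obtain ⟨f, g, zero, hS⟩ := h
  exact ⟨g.unop, f.unop, by rw [← unop_comp, zero, unop_zero], hS.unop⟩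

lemma IsSES.kernel {B X : C} (g : B ⟶ X) [Epi g] : IsSES (kernel g) B X :=
  .of_kernel (kernel.ι g) g (kernel.condition g)
    fun k hk => ⟨kernel.lift g k hk, kernel.lift_ι g k hk⟩

lemma IsSES.zero_left (M : C) : IsSES (0 : C) M M :=
  .of_kernel 0 (𝟙 M) zero_comp fun k hk => ⟨0, by simpa using hk.symm⟩

lemma IsSES.zero_right (M : C) : IsSES M M (0 : C) := by
  have : Epi (0 : M ⟶ (0 : C)) := ⟨fun _ _ _ => (isZero_zero C).eq_of_src _ _⟩
  exact .of_kernel (𝟙 M) 0 comp_zero fun k _ => ⟨k, by simp⟩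

lemma IsSES.of_iso₃ {A B X X' : C} (h : IsSES A B X) (e : X ≅ X') : IsSES A B X' := by
  obtain ⟨f, g, zero, hS⟩ := h
  have := hS.mono_f
  have := hS.epi_g
  dsimp at this
  exact .of_kernel f (g ≫ e.hom) (by rw [← Category.assoc, zero, zero_comp]) fun k hk =>
    ⟨hS.exact.lift k (by simpa [← Category.assoc] using hk), hS.exact.lift_f _ _⟩

lemma IsSES.biprod (M N : C) : IsSES M (M ⊞ N) N :=
  .of_kernel biprod.inl biprod.snd biprod.inl_snd fun k hk => ⟨k ≫ biprod.fst, by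
    ext <;> simp [hk]⟩

/-- In a pullback square along an epimorphism `g`, the projection parallel to `g` has the same
kernel as `g`. -/
lemma IsSES.of_isPullback {K U H P Q : C} {f : K ⟶ U} {g : U ⟶ H} {zero : f ≫ g = 0}
    (hS : (ShortComplex.mk f g zero).ShortExact) {a : P ⟶ U} {b : P ⟶ Q} {q : Q ⟶ H}
    (sq : IsPullback a b g q) [Epi b] : IsSES K P Q := by
  have : Mono f := hS.mono_f
  have hw : f ≫ g = (0 : K ⟶ Q) ≫ q := by rw [zero, zero_comp]
  have : Mono (sq.lift f 0 hw) := mono_of_mono_fac (sq.lift_fst _ _ _)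
  refine .of_kernel (sq.lift f 0 hw) b (sq.lift_snd _ _ _) fun k hk => ?_
  obtain ⟨l, hl⟩ : ∃ l, l ≫ f = k ≫ a :=
    ⟨_, hS.exact.lift_f (k ≫ a) (by
      dsimp
      rw [Category.assoc, sq.w, ← Category.assoc, hk, zero_comp])⟩
  refine ⟨l, sq.hom_ext ?_ ?_⟩
  · rw [Category.assoc, sq.lift_fst, hl]
  · rw [Category.assoc, sq.lift_snd, hk, comp_zero]

/-- The pullback of two epimorphisms onto `H`, together with the kernels of its projections. -/
lemma IsSES.pullback {K U H L Q : C} (h₁ : IsSES K U H) (h₂ : IsSES L Q H) :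
    ∃ P : C, IsSES K P Q ∧ IsSES L P U := by
  obtain ⟨f, g, zero, hS⟩ := h₁
  obtain ⟨f', g', zero', hS'⟩ := h₂
  have : Epi g := hS.epi_g
  have : Epi g' := hS'.epi_g
  have sq := IsPullback.of_hasPullback g g'
  exact ⟨Limits.pullback g g', .of_isPullback hS sq, .of_isPullback hS' sq.flip⟩

lemma IsSES.pushout {A B M H V : C} (h₁ : IsSES A B M) (h₂ : IsSES A H V) :
    ∃ E : C, IsSES H E M ∧ IsSES B E V := by
  obtain ⟨P, hP, hP'⟩ := h₁.op.pullback h₂.op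
  exact ⟨P.unop, hP.unop, hP'.unop⟩

/-- The kernel of a composite of epimorphisms `U ⟶ B ⟶ V`. -/
lemma IsSES.comp_epi {K U B M V : C} (h₁ : IsSES K U B) (h₂ : IsSES M B V) :
    ∃ P : C, IsSES K P M ∧ IsSES P U V := by
  obtain ⟨f, g, zero, hS⟩ := h₁
  obtain ⟨f', g', zero', hS'⟩ := h₂
  have : Epi g := hS.epi_g
  have : Mono f' := hS'.mono_f
  have : Epi g' := hS'.epi_g
  refine ⟨Limits.pullback g f', .of_isPullback hS (IsPullback.of_hasPullback g f'), ?_⟩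
  refine .of_kernel (pullback.fst g f') (g ≫ g')
    (by rw [pullback.condition_assoc, zero', comp_zero]) fun k hk => ?_
  exact ⟨pullback.lift k (hS'.exact.lift (k ≫ g) (by simpa using hk))
    (hS'.exact.lift_f _ _).symm, pullback.lift_fst _ _ _⟩

/-- The cokernel of a composite of monomorphisms `H ⟶ E ⟶ W`. -/
lemma IsSES.comp_mono {E W V H M : C} (h₁ : IsSES E W V) (h₂ : IsSES H E M) :
    ∃ Q : C, IsSES H W Q ∧ IsSES M Q V := by
  obtain ⟨P, hP, hP'⟩ := h₁.op.comp_epi h₂.op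
  exact ⟨P.unop, hP'.unop, hP.unop⟩

/-! ### Approximations -/

/-- `M` has a left approximation: a short exact sequence `0 → K → U → M → 0` with `K ∈ Y` and
`U ∈ X`. -/
def LeftApprox (X Y : C → Prop) (M : C) : Prop :=
  ∃ K U : C, Y K ∧ X U ∧ IsSES K U M

/-- `M` has a right approximation: a short exact sequence `0 → M → H → V → 0` with `H ∈ Y` and
`V ∈ X`. -/
def RightApprox (X Y : C → Prop) (M : C) : Prop :=
  ∃ H V : C, Y H ∧ X V ∧ IsSES M H V

/-- Every object of `X` embeds into an object of `X ∩ Y` with cokernel in `X`. -/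
def Cogen (X Y : C → Prop) : Prop :=
  ∀ ⦃M : C⦄, X M → ∃ W V : C, X W ∧ Y W ∧ X V ∧ IsSES M W V

section Approx

variable {X Y : C → Prop}

lemma LeftApprox.right (hcog : Cogen X Y) (hY : ClosedUnderCones Y) {M : C}
    (h : LeftApprox X Y M) : RightApprox X Y M := by
  obtain ⟨K, U, hK, hU, hs⟩ := h
  obtain ⟨W, V, -, hW, hV, hs'⟩ := hcog hU
  obtain ⟨Q, h₁, h₂⟩ := hs'.comp_mono hs
  exact ⟨Q, V, hY h₁ hK hW, hV, h₂⟩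

lemma LeftApprox.of_right_kernel (hX : ClosedUnderExtensions X) {K U M : C} (hs : IsSES K U M)
    (hK : RightApprox X Y K) (hU : X U) : LeftApprox X Y M := by
  obtain ⟨H, V, hH, hV, hs'⟩ := hK
  obtain ⟨E, h₁, h₂⟩ := hs.pushout hs'
  exact ⟨H, E, hH, hX h₂ hU hV, h₁⟩

lemma Cogen.zero (hcog : Cogen X Y) (hY : ClosedUnderCones Y) {M : C} (hM : X M) :
    Y (0 : C) := by
  obtain ⟨W, -, -, hW, -, -⟩ := hcog hM
  exact hY (IsSES.zero_right W) hW hW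

lemma LeftApprox.of_mem (hcog : Cogen X Y) (hY : ClosedUnderCones Y) {M : C} (hM : X M) :
    LeftApprox X Y M :=
  ⟨0, M, hcog.zero hY hM, hM, IsSES.zero_left M⟩

lemma LeftApprox.of_resClass (hX : ClosedUnderExtensions X) (hcog : Cogen X Y)
    (hY : ClosedUnderCones Y) {M : C} (h : ResClass X M) : LeftApprox X Y M := by
  obtain ⟨n, hn⟩ := h
  induction hn with
  | @of_iso M W hW e => exact ⟨0, W, hcog.zero hY hW, hW, (IsSES.zero_left W).of_iso₃ e.symm⟩
  | step hW hs _ ih => exact .of_right_kernel hX hs (ih.right hcog hY) hW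

end Approx

/-! ### Ext-vanishing -/

section Ext

variable [HasExt.{w} C]

lemma IsSES.ext_subsingleton₃ {K W M N : C} (hs : IsSES K W M) {i j : ℕ} (hij : i + 1 = j)
    (h₁ : Subsingleton (Ext N K j)) (h₂ : Subsingleton (Ext N W i)) :
    Subsingleton (Ext N M i) := by
  obtain ⟨f, g, zero, hS⟩ := hs
  refine subsingleton_of_forall_eq 0 fun x => ?_
  obtain ⟨y, rfl⟩ := Ext.covariant_sequence_exact₃ N hS x hij (h₁.elim _ _)
  rw [h₂.elim y 0, Ext.zero_comp]

lemma IsSES.ext_subsingleton_left₃ {K W M N : C} (hs : IsSES K W M) {i j : ℕ} (hij : 1 + i = j)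
    (h₁ : Subsingleton (Ext K N i)) (h₂ : Subsingleton (Ext W N j)) :
    Subsingleton (Ext M N j) := by
  obtain ⟨f, g, zero, hS⟩ := hs
  refine subsingleton_of_forall_eq 0 fun x => ?_
  obtain ⟨y, rfl⟩ := Ext.contravariant_sequence_exact₃ hS N x (h₂.elim _ _) hij
  rw [h₁.elim y 0, Ext.comp_zero]

lemma IsSES.ext_subsingleton_left₁ {K W M N : C} (hs : IsSES K W M) {i j : ℕ} (hij : 1 + i = j)
    (h₁ : Subsingleton (Ext W N i)) (h₂ : Subsingleton (Ext M N j)) :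
    Subsingleton (Ext K N i) := by
  obtain ⟨f, g, zero, hS⟩ := hs
  refine subsingleton_of_forall_eq 0 fun x => ?_
  obtain ⟨y, rfl⟩ := Ext.contravariant_sequence_exact₁ hS N x hij (h₂.elim _ _)
  rw [h₁.elim y 0, Ext.comp_zero]

lemma ext_subsingleton_of_retract {M M' N : C} (i : M' ⟶ M) (r : M ⟶ M') (hir : i ≫ r = 𝟙 M')
    {n : ℕ} (h : Subsingleton (Ext M N n)) : Subsingleton (Ext M' N n) := by
  refine subsingleton_of_forall_eq 0 fun x => ?_
  rw [← Ext.mk₀_id_comp x, ← hir, ← Ext.mk₀_comp_mk₀_assoc,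
    h.elim ((Ext.mk₀ r).comp x (zero_add n)) 0, Ext.comp_zero]

/-- A short exact sequence `0 → H → Q → V → 0` with `Ext^1(V, H) = 0` splits: it has a section,
and a short exact sequence in the other direction. -/
lemma IsSES.split {H Q V : C} (hs : IsSES H Q V) (h : Subsingleton (Ext V H 1)) :
    IsSES V Q H ∧ ∃ (s : V ⟶ Q) (r : Q ⟶ V), s ≫ r = 𝟙 V := by
  obtain ⟨f, g, zero, hS⟩ := hs
  have : Mono f := hS.mono_f
  obtain ⟨y, hy⟩ := Ext.covariant_sequence_exact₃ V hS (Ext.mk₀ (𝟙 V)) (zero_add 1) (h.elim _ _)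
  obtain ⟨s, rfl⟩ := (Ext.mk₀_bijective _ _).2 y
  rw [Ext.mk₀_comp_mk₀] at hy
  have hsg : s ≫ g = 𝟙 V := (Ext.mk₀_bijective _ _).1 hy
  refine ⟨?_, s, g, hsg⟩
  let r : Q ⟶ H := hS.exact.lift (𝟙 Q - g ≫ s) (by simp [hsg])
  have hr : r ≫ f = 𝟙 Q - g ≫ s := hS.exact.lift_f _ _
  have hfr : f ≫ r = 𝟙 H := by
    rw [← cancel_mono f]; simp [hr, reassoc_of% zero]
  have hsr : s ≫ r = 0 := by
    rw [← cancel_mono f]; simp [hr, reassoc_of% hsg]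
  have : Mono s := mono_of_mono_fac hsg
  have : Epi r := epi_of_epi_fac hfr
  refine .of_kernel s r hsr fun k hk => ⟨k ≫ g, ?_⟩
  have : k ≫ (𝟙 Q - g ≫ s) = 0 := by rw [← hr, ← Category.assoc, hk, zero_comp]
  rw [Preadditive.comp_sub, Category.comp_id, sub_eq_zero] at this
  rw [Category.assoc, ← this]

/-- If `X ∩ Y` is `X`-injective and every object of `Y` has a finite `X`-resolution, then
`Ext^i(X, Y) = 0` for all `i ≥ 1`. -/
lemma extVanish_of_frobenius {X Y : C → Prop} (hX : ClosedUnderExtensions X)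
    (hYe : ClosedUnderExtensions Y) (hYc : ClosedUnderCones Y) (hcog : Cogen X Y)
    (hω : ExtVanish X fun M => X M ∧ Y M) (hres : ∀ ⦃M : C⦄, Y M → ResClass X M) :
    ExtVanish X Y := by
  let Z : C → Prop := fun M => Y M ∧ ∀ ⦃N : C⦄, X N → ∀ i : ℕ, 1 ≤ i → Subsingleton (Ext N M i)
  have hωZ : ∀ ⦃M : C⦄, X M → Y M → Z M := fun M hM hM' =>
    ⟨hM', fun N hN => hω hN ⟨hM, hM'⟩⟩
  have hZ : ClosedUnderCones Z := fun K W M hs hK hW =>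
    ⟨hYc hs hK.1 hW.1, fun N hN i hi =>
      hs.ext_subsingleton₃ rfl (hK.2 hN (i + 1) (by omega)) (hW.2 hN i hi)⟩
  have hcogZ : Cogen X Z := fun M hM => by
    obtain ⟨W, V, hW, hW', hV, hs⟩ := hcog hM
    exact ⟨W, V, hW, hωZ hW hW', hV, hs⟩
  intro N M hN hM
  obtain ⟨K, U, hK, hU, hs⟩ := LeftApprox.of_resClass hX hcogZ hZ (hres hM)
  exact (hZ hs hK (hωZ hU (hYe hs hK.1 hM))).2 hN

/-! ### The approximable objects form a thick class -/

/-- A left weak Auslander–Buchweitz context `(X, Y)`, with the `X`-injectivity of `X ∩ Y`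
strengthened to `Ext^i(X, Y) = 0` for `i ≥ 1`. -/
structure ABContext (X Y : C → Prop) : Prop where
  left : LeftThick X
  right : RightThick Y
  ext : ExtVanish X Y
  cogen : Cogen X Y
  res : ∀ ⦃M : C⦄, Y M → ResClass X M

namespace ABContext

variable {X Y : C → Prop} (c : ABContext X Y)
include c

lemma right_of_left {M : C} (h : LeftApprox X Y M) : RightApprox X Y M :=
  h.right c.cogen c.right.2.2

lemma of_right_kernel {K U M : C} (hs : IsSES K U M) (hK : LeftApprox X Y K) (hU : X U) :
    LeftApprox X Y M :=
  .of_right_kernel c.left.1 hs (c.right_of_left hK) hU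

lemma of_mem_left {M : C} (hM : X M) : LeftApprox X Y M := .of_mem c.cogen c.right.2.2 hM

lemma of_mem_right {M : C} (hM : Y M) : LeftApprox X Y M :=
  .of_resClass c.left.1 c.cogen c.right.2.2 (c.res hM)

/-- Kernels of epimorphisms onto objects of `X` stay approximable. -/
lemma cocone_left {M B V : C} (hs : IsSES M B V) (hB : LeftApprox X Y B) (hV : X V) :
    LeftApprox X Y M := by
  obtain ⟨K, U, hK, hU, hs'⟩ := hB
  obtain ⟨P, h₁, h₂⟩ := hs'.comp_epi hs
  exact ⟨K, P, hK, c.left.2.2 h₂ hU hV, h₁⟩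

lemma left_of_right {M : C} (h : RightApprox X Y M) : LeftApprox X Y M := by
  obtain ⟨H, V, hH, hV, hs⟩ := h
  exact c.cocone_left hs (c.of_mem_right hH) hV

/-- Quotients by subobjects in `Y` stay approximable. -/
lemma cone_right {K B M : C} (hs : IsSES K B M) (hK : Y K) (hB : LeftApprox X Y B) :
    LeftApprox X Y M := by
  obtain ⟨H, V, hH, hV, hs'⟩ := c.right_of_left hB
  obtain ⟨Q, h₁, h₂⟩ := hs'.comp_mono hs
  exact c.left_of_right ⟨Q, V, c.right.2.2 h₁ hK hH, hV, h₂⟩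

/-- An extension of `V ∈ X` by `H ∈ Y` is approximable: it splits, and the pullback of a left
approximation of `H` along the retraction onto `H` is a left approximation. -/
lemma ext_mem {H Q V : C} (hs : IsSES H Q V) (hH : Y H) (hV : X V) : LeftApprox X Y Q := by
  obtain ⟨K, U, hK, hU, hs'⟩ := c.of_mem_right hH
  obtain ⟨P, h₁, h₂⟩ := hs'.pullback (hs.split (c.ext hV hH 1 le_rfl)).1
  exact ⟨K, P, hK, c.left.1 h₂ hV hU, h₁⟩

lemma ext_closed : ClosedUnderExtensions (LeftApprox X Y) := by
  intro M₁ M₂ M₃ hs h₁ ⟨K₃, U₃, hK₃, hU₃, hs₃⟩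
  obtain ⟨H₁, V₁, hH₁, hV₁, hs₁⟩ := c.right_of_left h₁
  obtain ⟨P, hP, hP'⟩ := hs₃.pullback hs
  obtain ⟨Q, hQ, hQ'⟩ := hP'.pushout hs₁
  exact c.cone_right hP hK₃ (c.cocone_left hQ' (c.ext_mem hQ hH₁ hU₃) hV₁)

lemma cone_closed : ClosedUnderCones (LeftApprox X Y) := by
  intro M₁ M₂ M₃ hs h₁ h₂
  obtain ⟨H₁, V₁, hH₁, hV₁, hs₁⟩ := c.right_of_left h₁
  obtain ⟨H₂, V₂, hH₂, hV₂, hs₂⟩ := c.right_of_left h₂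
  obtain ⟨Q, hQ, hQ'⟩ := hs₂.comp_mono hs
  obtain ⟨E, hE, hE'⟩ := hQ.pushout hs₁
  exact c.cocone_left hQ' (c.cone_right hE hH₁ (c.ext_mem hE' hH₂ hV₁)) hV₂

lemma cocone_closed : ClosedUnderCocones (LeftApprox X Y) := by
  intro M₁ M₂ M₃ hs h₂ ⟨K₃, U₃, hK₃, hU₃, hs₃⟩
  obtain ⟨P, hP, hP'⟩ := hs₃.pullback hs
  exact c.cocone_left hP' (c.ext_closed hP (c.of_mem_right hK₃) h₂) hU₃

/-- An approximable object has bounded projective dimension relative to `Y`. -/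
lemma exists_bound {M : C} (h : LeftApprox X Y M) :
    ∃ n : ℕ, ∀ ⦃N : C⦄, Y N → ∀ i : ℕ, n < i → Subsingleton (Ext M N i) := by
  obtain ⟨K, U, hK, hU, hs⟩ := h
  obtain ⟨n, hn⟩ := c.res hK
  refine ⟨n + 1, ?_⟩
  have hM : HasResLength X (n + 1) M := .step hU hs hn
  generalize n + 1 = m at hM
  clear hs hU hK hn
  induction hM with
  | of_iso hW e =>
    exact fun N hN i hi => ext_subsingleton_of_retract e.hom e.inv e.hom_inv_id
      (c.ext hW hN i hi)
  | step hW hs _ ih =>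
    intro N hN i hi
    obtain ⟨j, rfl⟩ : ∃ j, i = 1 + j := ⟨i - 1, by omega⟩
    exact hs.ext_subsingleton_left₃ rfl (ih hN j (by omega)) (c.ext hW hN _ (by omega))

/-- Summands of approximable objects are approximable, by induction on a bound `n` for the
projective dimension relative to `Y`. -/
lemma summand_of_bound (n : ℕ) : ∀ ⦃M M' : C⦄, LeftApprox X Y M →
    (∀ ⦃N : C⦄, Y N → ∀ i : ℕ, n < i → Subsingleton (Ext M N i)) →
    ∀ (i : M' ⟶ M) (r : M ⟶ M'), i ≫ r = 𝟙 M' → LeftApprox X Y M' := by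
  induction n with
  | zero =>
    intro M M' ⟨K, U, hK, hU, hs⟩ hM i r hir
    obtain ⟨-, s, p, hsp⟩ := hs.split (hM hK 1 one_pos)
    exact c.of_mem_left (c.left.2.1 hU ⟨i ≫ s, p ≫ r, by simp [reassoc_of% hsp, hir]⟩)
  | succ n ih =>
    intro M M' hM hb i r hir
    obtain ⟨K, U, hK, hU, f, p, zero, hS⟩ := id hM
    have : Epi p := hS.epi_g
    have : Epi r := epi_of_epi_fac hir
    -- With `e = r ≫ i`, the map `(e ∘ p, (1 - e) ∘ p)` is the sum of epimorphisms from `U` onto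
    -- `M'` and onto its complement.
    let φ : U ⊞ U ⟶ M := biprod.desc (p ≫ r ≫ i) (p ≫ (𝟙 M - r ≫ i))
    have hφ : biprod.lift (𝟙 U) (𝟙 U) ≫ φ = p := by simp [φ]
    have : Epi φ := epi_of_epi_fac hφ
    have hφr : φ ≫ r = biprod.fst ≫ p ≫ r := by
      apply biprod.hom_ext' <;> simp [φ, hir]
    have hUU : X (U ⊞ U) := c.left.1 (IsSES.biprod U U) hU hU
    have hN := IsSES.kernel φ
    refine c.of_right_kernel (IsSES.kernel (p ≫ r)) (ih (c.cocone_closed hN (c.of_mem_left hUU) hM)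
      (fun N hN' j hj => hN.ext_subsingleton_left₁ rfl (c.ext hUU hN' j (by omega))
        (hb hN' (1 + j) (by omega)))
      (kernel.lift φ (kernel.ι (p ≫ r) ≫ biprod.inl) ?_)
      (kernel.lift (p ≫ r) (kernel.ι φ ≫ biprod.fst) ?_) ?_) hU
    · have := kernel.condition (p ≫ r)
      simp [φ, reassoc_of% this]
    · rw [Category.assoc, ← hφr, kernel.condition_assoc, zero_comp]
    · rw [← cancel_mono (kernel.ι (p ≫ r))]
      simp

lemma of_thickClosure {M : C} (h : ThickClosure X M) : LeftApprox X Y M := by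
  induction h with
  | of h => exact c.of_mem_left h
  | ext hs _ _ h₁ h₂ => exact c.ext_closed hs h₁ h₂
  | cone hs _ _ h₁ h₂ => exact c.cone_closed hs h₁ h₂
  | cocone hs _ _ h₁ h₂ => exact c.cocone_closed hs h₁ h₂
  | summand _ i r hir h =>
    obtain ⟨n, hn⟩ := c.exists_bound h
    exact c.summand_of_bound n h hn i r hir

end ABContext

end Ext

theorem stmt_9 [HasExt.{w} C] (A B S : C → Prop)
    (h : IsLeftWeakABCut A B S) :
    Is1CotorsionCut (fun M => A M ∧ S M) (fun M => B M ∧ S M)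
      (ThickClosure (fun M => A M ∧ S M)) ∧
    ExtVanish (fun M => A M ∧ S M) (fun M => B M ∧ S M) := by
  obtain ⟨⟨-, ⟨hX, -, -, hω, hcog⟩, -, -⟩, hY, hres⟩ := h
  have hcog' : Cogen (fun M => A M ∧ S M) (fun M => B M ∧ S M) := fun M hM => by
    obtain ⟨W, V, hW, hV, hs⟩ := hcog hM
    exact ⟨W, V, ⟨hW.1.1, hW.2⟩, ⟨hW.1.2, hW.2⟩, hV, hs⟩
  have hres' : ∀ ⦃M : C⦄, B M ∧ S M → ResClass (fun M => A M ∧ S M) M :=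
    fun M hM => hres hM.1 hM.2
  have hext : ExtVanish (fun M => A M ∧ S M) (fun M => B M ∧ S M) :=
    extVanish_of_frobenius hX.1 hY.1 hY.2.2 hcog'
      (fun N M hN hM => hω hN ⟨⟨hM.1.1, hM.2.1⟩, hM.1.2⟩) hres'
  have c : ABContext (fun M => A M ∧ S M) (fun M => B M ∧ S M) := ⟨hX, hY, hext, hcog', hres'⟩
  refine ⟨⟨⟨hX.2.1, fun N M hN _ hM => hext hN hM 1 le_rfl, fun t ht => ?_⟩,
    ⟨hY.2.1, fun N M hN hM _ => hext hN hM 1 le_rfl, fun t ht => ?_⟩⟩, hext⟩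
  · obtain ⟨K, U, hK, hU, hs⟩ := c.of_thickClosure ht
    exact ⟨K, U, hU, ⟨K, hK, ⟨Iso.refl K⟩⟩, hs⟩
  · obtain ⟨H, V, hH, hV, hs⟩ := c.right_of_left (c.of_thickClosure ht)
    exact ⟨H, V, hH, ⟨V, hV, ⟨Iso.refl V⟩⟩, hs⟩
end

section
/- Let C be an abelian category with Ext groups and let (F,G) be a 1-cotorsion pair cut on Thick(F) such that Ext^i(A,B)=0 for all A∈F, B∈G and all i≥1. Then (F, F∩G) is a left Frobenius pair in C and Thick(F) = F^∧. -/
/-!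
The proof rests on the functors `Ext^i(-, B)` for `B ∈ G`. Write `T` for the thick closure of `F`.

* An object `t ∈ T` lies in `F` as soon as `Ext^1(t, B) = 0` for all `B ∈ G`: in a short exact
  sequence `0 → K → A → t → 0` with `A ∈ F` and `K ∈ G` the extension splits, so `t` is a direct
  summand of `A` (`mem_of_extVanishAbove`). Hence `F` is exactly the class of objects of `T` with
  `Ext^i(-, G) = 0` for all `i ≥ 1`, and the long exact sequence makes it left thick. For `A ∈ F`,
  a short exact sequence `0 → A → B → W → 0` with `B ∈ G` and `W ∈ F` has `B ∈ F` by closure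
  under extensions, so `F ∩ G` is a relative cogenerator in `F`.
* The objects `M` for which `Ext^i(M, G)` vanishes for `i` large form a thick class containing `F`,
  so every `M ∈ T` has this property (`exists_extVanishAbove`). If `Ext^i(M, G) = 0` for all
  `i > n`, replacing `M` by the kernel of an approximation `A → M` as above lowers `n` by one;
  by induction, `M` has an `F`-resolution of length `n` (`hasResLength_of_extVanishAbove`).
-/


open CategoryTheory

universe w v u

variable {C : Type u} [Category.{v} C] [Abelian C]

open Abelian

/-- `Ext^i(M, B) = 0` for all `B ∈ G` and all `i > n`. -/
def ExtVanishAbove [HasExt.{w} C] (G : C → Prop) (n : ℕ) (M : C) : Prop :=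
  ∀ ⦃B : C⦄, G B → ∀ i : ℕ, n < i → Subsingleton (Ext M B i)

lemma ClosedUnderSummands.mem_of_iso {P : C → Prop} (hP : ClosedUnderSummands P) {X Y : C}
    (e : X ≅ Y) (hY : P Y) : P X :=
  hP hY ⟨e.hom, e.inv, e.hom_inv_id⟩

section LongExactSequence

variable [HasExt.{w} C] {A B X : C}

lemma IsSES.subsingleton_ext_middle (h : IsSES A B X) (Y : C) (n : ℕ)
    (hA : Subsingleton (Ext A Y n)) (hX : Subsingleton (Ext X Y n)) :
    Subsingleton (Ext B Y n) := by
  obtain ⟨f, g, zero, hS⟩ := h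
  refine subsingleton_of_forall_eq 0 fun x => ?_
  obtain ⟨y, rfl⟩ := Ext.contravariant_sequence_exact₂ hS Y x (hA.elim _ _)
  rw [hX.elim y 0, Ext.comp_zero]

lemma IsSES.subsingleton_ext_left (h : IsSES A B X) (Y : C) (n : ℕ)
    (hB : Subsingleton (Ext B Y n)) (hX : Subsingleton (Ext X Y (n + 1))) :
    Subsingleton (Ext A Y n) := by
  obtain ⟨f, g, zero, hS⟩ := h
  refine subsingleton_of_forall_eq 0 fun x => ?_
  obtain ⟨y, rfl⟩ := Ext.contravariant_sequence_exact₁ hS Y x (Nat.add_comm 1 n) (hX.elim _ _)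
  rw [hB.elim y 0, Ext.comp_zero]

lemma IsSES.subsingleton_ext_right (h : IsSES A B X) (Y : C) (n : ℕ)
    (hA : Subsingleton (Ext A Y n)) (hB : Subsingleton (Ext B Y (n + 1))) :
    Subsingleton (Ext X Y (n + 1)) := by
  obtain ⟨f, g, zero, hS⟩ := h
  refine subsingleton_of_forall_eq 0 fun x => ?_
  obtain ⟨y, rfl⟩ := Ext.contravariant_sequence_exact₃ hS Y x (hB.elim _ _) (Nat.add_comm 1 n)
  rw [hA.elim y 0, Ext.comp_zero]

lemma subsingleton_ext_of_summand {i : B ⟶ A} {r : A ⟶ B} (hir : i ≫ r = 𝟙 B) (Y : C) (n : ℕ)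
    (hA : Subsingleton (Ext A Y n)) : Subsingleton (Ext B Y n) := by
  refine subsingleton_of_forall_eq 0 fun x => ?_
  rw [← Ext.mk₀_id_comp x, ← hir, ← Ext.mk₀_comp_mk₀_assoc,
    hA.elim ((Ext.mk₀ r).comp x (zero_add n)) 0, Ext.comp_zero]

/-- A short exact sequence `0 → A → B → X → 0` with `Ext^1(X, A) = 0` splits: the obstruction to
lifting `𝟙 X` along `B → X` is its image in `Ext^1(X, A)`. -/
lemma IsSES.exists_section (h : IsSES A B X) (hXA : Subsingleton (Ext X A 1)) :
    ∃ (i : X ⟶ B) (r : B ⟶ X), i ≫ r = 𝟙 X := by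
  obtain ⟨f, g, zero, hS⟩ := h
  obtain ⟨x, hx⟩ := Ext.covariant_sequence_exact₃ X hS (Ext.mk₀ (𝟙 X)) (zero_add 1) (hXA.elim _ _)
  obtain ⟨s, rfl⟩ := Ext.homEquiv₀.symm.surjective x
  refine ⟨s, g, (Ext.mk₀_bijective X X).1 ?_⟩
  rw [← Ext.mk₀_comp_mk₀]
  exact hx

variable {G : C → Prop} {n : ℕ}

lemma ExtVanishAbove.mono {M : C} {m : ℕ} (h : ExtVanishAbove G n M) (hnm : n ≤ m) :
    ExtVanishAbove G m M :=
  fun _ hY i hi => h hY i (hnm.trans_lt hi)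

lemma ExtVanishAbove.middle (h : IsSES A B X) (hA : ExtVanishAbove G n A)
    (hX : ExtVanishAbove G n X) : ExtVanishAbove G n B :=
  fun Y hY i hi => h.subsingleton_ext_middle Y i (hA hY i hi) (hX hY i hi)

lemma ExtVanishAbove.left (h : IsSES A B X) (hB : ExtVanishAbove G n B)
    (hX : ExtVanishAbove G (n + 1) X) : ExtVanishAbove G n A :=
  fun Y hY i hi => h.subsingleton_ext_left Y i (hB hY i hi) (hX hY (i + 1) (by lia))

lemma ExtVanishAbove.right (h : IsSES A B X) (hA : ExtVanishAbove G n A)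
    (hB : ExtVanishAbove G (n + 1) B) : ExtVanishAbove G (n + 1) X := by
  intro Y hY i hi
  obtain ⟨j, rfl⟩ : ∃ j, i = j + 1 := ⟨i - 1, by lia⟩
  exact h.subsingleton_ext_right Y j (hA hY j (by lia)) (hB hY (j + 1) hi)

end LongExactSequence

section CotorsionCut

variable [HasExt.{w} C] {F G : C → Prop}

lemma ExtVanish.extVanishAbove_zero (hvan : ExtVanish F G) {A : C} (hA : F A) :
    ExtVanishAbove G 0 A :=
  fun _ hB i hi => hvan hA hB i hi

lemma exists_extVanishAbove (hvan : ExtVanish F G) {M : C} (hM : ThickClosure F M) :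
    ∃ n, ExtVanishAbove G n M := by
  induction hM with
  | of h => exact ⟨0, hvan.extVanishAbove_zero h⟩
  | ext h _ _ ihA ihX =>
    obtain ⟨a, ha⟩ := ihA
    obtain ⟨b, hb⟩ := ihX
    exact ⟨max a b, .middle h (ha.mono (by lia)) (hb.mono (by lia))⟩
  | cone h _ _ ihA ihB =>
    obtain ⟨a, ha⟩ := ihA
    obtain ⟨b, hb⟩ := ihB
    exact ⟨max a b + 1, .right h (ha.mono (by lia)) (hb.mono (by lia))⟩
  | cocone h _ _ ihB ihX =>
    obtain ⟨a, ha⟩ := ihB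
    obtain ⟨b, hb⟩ := ihX
    exact ⟨max a b, .left h (ha.mono (by lia)) (hb.mono (by lia))⟩
  | summand _ _ _ hir ih =>
    obtain ⟨a, ha⟩ := ih
    exact ⟨a, fun Y hY j hj => subsingleton_ext_of_summand hir Y j (ha hY j hj)⟩

/-- Special `F`-precovers in the thick closure of `F`, with kernel in `G` itself. -/
lemma exists_precover (h : IsLeft1CotorsionCut F G (ThickClosure F)) (hG : ClosedUnderSummands G)
    {t : C} (ht : ThickClosure F t) : ∃ K A : C, G K ∧ F A ∧ IsSES K A t := by
  obtain ⟨K, A, hA, ⟨V, hV, ⟨e⟩⟩, hS⟩ := h.2.2 ht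
  exact ⟨K, A, hG.mem_of_iso e hV, hA, hS⟩

lemma mem_of_extVanishAbove (h : IsLeft1CotorsionCut F G (ThickClosure F))
    (hG : ClosedUnderSummands G) {t : C} (ht : ThickClosure F t) (hv : ExtVanishAbove G 0 t) :
    F t := by
  obtain ⟨K, A, hK, hA, hS⟩ := exists_precover h hG ht
  exact h.1 hA (hS.exists_section (hv hK 1 one_pos))

lemma hasResLength_of_extVanishAbove (h : IsLeft1CotorsionCut F G (ThickClosure F))
    (hG : ClosedUnderSummands G) (hvan : ExtVanish F G) (n : ℕ) {M : C} (hM : ThickClosure F M)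
    (hv : ExtVanishAbove G n M) : HasResLength F n M := by
  induction n generalizing M with
  | zero => exact .of_iso (mem_of_extVanishAbove h hG hM hv) (Iso.refl M)
  | succ n ih =>
    obtain ⟨K, A, -, hA, hS⟩ := exists_precover h hG hM
    exact .step hA hS (ih (.cocone hS (.of hA) hM)
      (.left hS ((hvan.extVanishAbove_zero hA).mono n.zero_le) hv))

end CotorsionCut

lemma HasResLength.thickClosure {F : C → Prop} {n : ℕ} {M : C} (h : HasResLength F n M) :
    ThickClosure F M := by
  induction h with
  | of_iso hW e => exact .summand (.of hW) e.hom e.inv e.hom_inv_id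
  | step hW hS _ ih => exact .cone hS ih (.of hW)

theorem stmt_10 [HasExt.{w} C] (F G : C → Prop)
    (h : Is1CotorsionCut F G (ThickClosure F))
    (hvan : ExtVanish F G) :
    IsLeftFrobenius F (fun M => F M ∧ G M) ∧
    (∀ M : C, ThickClosure F M ↔ ResClass F M) := by
  obtain ⟨hl, hr⟩ := h
  have hF : ClosedUnderSummands F := hl.1
  have hG : ClosedUnderSummands G := hr.1
  have hExt : ClosedUnderExtensions F := fun A B X hS hA hX =>
    mem_of_extVanishAbove hl hG (.ext hS (.of hA) (.of hX))
      (.middle hS (hvan.extVanishAbove_zero hA) (hvan.extVanishAbove_zero hX))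
  have hCocone : ClosedUnderCocones F := fun A B X hS hB hX =>
    mem_of_extVanishAbove hl hG (.cocone hS (.of hB) (.of hX))
      (.left hS (hvan.extVanishAbove_zero hB) ((hvan.extVanishAbove_zero hX).mono zero_le_one))
  refine ⟨⟨⟨hExt, hF, hCocone⟩, fun _ hW => hW.1, fun X Y hX hY => ⟨hF hX.1 hY, hG hX.2 hY⟩,
    fun A B hA hB => hvan hA hB.2, fun A hA => ?_⟩, fun M => ⟨fun hM => ?_, ?_⟩⟩
  · obtain ⟨B, W, hB, ⟨U, hU, ⟨e⟩⟩, hS⟩ := hr.2.2 (.of hA)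
    have hW : F W := hF.mem_of_iso e hU
    exact ⟨B, W, ⟨hExt hS hA hW, hB⟩, hW, hS⟩
  · obtain ⟨n, hn⟩ := exists_extVanishAbove hvan hM
    exact ⟨n, hasResLength_of_extVanishAbove hl hG hvan n hM hn⟩
  · rintro ⟨n, hn⟩
    exact hn.thickClosure
end

section
/- Let C be an abelian category with Ext groups and let (F,G) be a 1-cotorsion pair cut on Thick(F) such that Ext^i(A,B)=0 for all A∈F, B∈G and all i≥1. Then F∩G = F∩F^{⊥1} = F∩(F∩G)^∧, where F^{⊥1} = {N : Ext^1(A,N)=0 for all A∈F}. -/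
/-!
An object `M` of `F ∩ G` has `Ext¹(A, M) = 0` for `A ∈ F`, and is its own resolution of
length zero. Conversely, let `M ∈ F`, so that `M` lies in the thick closure of `F`.

* The right cotorsion half gives `0 → M → B → W → 0` with `B ∈ G` and `W ∈ F` up to isomorphism.
  If `Ext¹(A, M) = 0` for all `A ∈ F`, the sequence splits (`exists_retraction_of_isSES`), and `M`
  is a direct summand of `B`, hence is in `G`.
* If `M` has a finite resolution by objects of `F ∩ G`, dimension shifting along it
  (`HasResLength.subsingleton_ext`) gives `Extⁱ(A, M) = 0` for all `A ∈ F` and `i ≥ 1`, which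
  reduces this case to the previous one. All positive degrees are needed here, since each
  step of the resolution raises the degree by one.
-/

open CategoryTheory

universe w v u

variable {C : Type u} [Category.{v} C] [Abelian C]

lemma subsingleton_ext_of_iso_right [HasExt.{w} C] {A M N : C} (e : M ≅ N) (i : ℕ)
    (hN : Subsingleton (Abelian.Ext A N i)) : Subsingleton (Abelian.Ext A M i) := by
  refine subsingleton_of_forall_eq 0 fun x => ?_
  have hx : x.comp (Abelian.Ext.mk₀ e.hom) (add_zero i) = 0 := Subsingleton.elim _ _
  have := congrArg (fun y => y.comp (Abelian.Ext.mk₀ e.inv) (add_zero i)) hx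
  simpa using this

lemma subsingleton_ext_of_iso_left [HasExt.{w} C] {A B M : C} (e : A ≅ B) (i : ℕ)
    (hB : Subsingleton (Abelian.Ext B M i)) : Subsingleton (Abelian.Ext A M i) := by
  refine subsingleton_of_forall_eq 0 fun x => ?_
  have hx : (Abelian.Ext.mk₀ e.inv).comp x (zero_add i) = 0 := Subsingleton.elim _ _
  have := congrArg (fun y => (Abelian.Ext.mk₀ e.hom).comp y (zero_add i)) hx
  simpa using this

/-- Dimension shifting: `Ext`-vanishing in all positive degrees passes from a class to the
objects it finitely resolves. -/
lemma HasResLength.subsingleton_ext [HasExt.{w} C] {P : C → Prop} {A : C}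
    (hP : ∀ ⦃N : C⦄, P N → ∀ i : ℕ, 1 ≤ i → Subsingleton (Abelian.Ext A N i))
    {n : ℕ} {M : C} (hM : HasResLength P n M) :
    ∀ i : ℕ, 1 ≤ i → Subsingleton (Abelian.Ext A M i) := by
  induction hM with
  | of_iso hW e => exact fun i hi => subsingleton_ext_of_iso_right e i (hP hW i hi)
  | step hW hS _ ih =>
    intro i hi
    obtain ⟨f, g, zero, hS⟩ := hS
    have hK := ih (i + 1) (by omega)
    have hW := hP hW i hi
    refine subsingleton_of_forall_eq 0 fun x => ?_
    obtain ⟨y, hy⟩ := Abelian.Ext.covariant_sequence_exact₃ A hS x rfl (Subsingleton.elim _ _)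
    rw [← hy, Subsingleton.elim y 0, Abelian.Ext.zero_comp]

/-- The identity of `M` extends along `M ⟶ B`, since the obstruction is the connecting image of
`𝟙 M` in `Ext¹(W, M)`. -/
lemma exists_retraction_of_isSES [HasExt.{w} C] {M B W : C} (hS : IsSES M B W)
    (hW : Subsingleton (Abelian.Ext W M 1)) : ∃ (i : M ⟶ B) (r : B ⟶ M), i ≫ r = 𝟙 M := by
  obtain ⟨f, g, zero, hS⟩ := hS
  obtain ⟨y, hy⟩ := Abelian.Ext.contravariant_sequence_exact₁ hS M (Abelian.Ext.mk₀ (𝟙 M))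
    (add_zero 1) (Subsingleton.elim _ _)
  obtain ⟨r, rfl⟩ := (Abelian.Ext.mk₀_bijective B M).2 y
  refine ⟨f, r, (Abelian.Ext.mk₀_bijective M M).1 ?_⟩
  simpa using hy

theorem stmt_11 [HasExt.{w} C] (F G : C → Prop)
    (h : Is1CotorsionCut F G (ThickClosure F))
    (hvan : ExtVanish F G) :
    ∀ M : C,
      ((F M ∧ G M) ↔ (F M ∧ ∀ ⦃A : C⦄, F A → Subsingleton (Abelian.Ext A M 1))) ∧
      ((F M ∧ G M) ↔ (F M ∧ ResClass (fun N => F N ∧ G N) M)) := by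
  intro M
  have key : F M → (∀ ⦃A : C⦄, F A → Subsingleton (Abelian.Ext A M 1)) → G M := by
    intro hM hext
    obtain ⟨hsum, -, hcov⟩ := h.2
    obtain ⟨B, W, hB, ⟨U', hU', ⟨e⟩⟩, hS⟩ := hcov (ThickClosure.of hM)
    exact hsum hB
      (exists_retraction_of_isSES hS (subsingleton_ext_of_iso_left e 1 (hext hU')))
  refine ⟨⟨fun hM => ⟨hM.1, fun A hA => hvan hA hM.2 1 le_rfl⟩,
      fun hM => ⟨hM.1, key hM.1 hM.2⟩⟩,
    ⟨fun hM => ⟨hM.1, 0, HasResLength.of_iso hM (Iso.refl M)⟩, ?_⟩⟩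
  rintro ⟨hM, n, hres⟩
  exact ⟨hM, key hM fun A hA => hres.subsingleton_ext (fun N hN => hvan hA hN.2) 1 le_rfl⟩
end
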